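/- arXiv:1806.07957 — 3 statements merged into one kernel-verified Lean document; each statement's English description precedes it below -/
import Mathlib

section
/- The weight function w̃₄(λ,x) = exp( ((1+x)^λ − 1)/λ ) − x is strictly totally positive of order infinity on (0,∞)²: for every r ≥ 1 and all λ₁ > λ₂ > ⋯ > λ_r > 0 and x₁ > x₂ > ⋯ > x_r > 0, the r×r determinant det( (w̃₄(λ_i,x_j))_{i,j=1}^r ) is strictly positive. -/
section Aux
open Finset
theorem cauchyBinet {r N : ℕ} (A : Matrix (Fin r) (Fin N) ℝ) (B : Matrix (Fin N) (Fin r) ℝ) :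
    (A * B).det = ∑ s : {s : Fin r → Fin N // StrictMono s},
      (A.submatrix id s.1).det * (B.submatrix s.1 id).det := by
  classical
  have h1 : (A * B).det = ∑ f : Fin r → Fin N, (∏ i, A i (f i)) * (B.submatrix f id).det := by
    have : (A * B) = fun i => ∑ m, A i m • B m := by
      ext i j
      simp [Matrix.mul_apply, Finset.sum_apply]
    rw [this]
    change Matrix.detRowAlternating (fun i => ∑ m, A i m • B m) = _
    change (Matrix.detRowAlternating (n := Fin r) (R := ℝ)).toMultilinearMap _ = _
    rw [MultilinearMap.map_sum]
    refine Finset.sum_congr rfl fun f _ => ?_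
    rw [MultilinearMap.map_smul_univ]
    rfl
  rw [h1]
  have h2 : ∀ s : {s : Fin r → Fin N // StrictMono s},
      (A.submatrix id s.1).det * (B.submatrix s.1 id).det =
      ∑ σ : Equiv.Perm (Fin r), (∏ i, A i (s.1 (σ i))) * (B.submatrix (s.1 ∘ σ) id).det := by
    intro s
    rw [← Matrix.det_transpose, Matrix.det_apply', Finset.sum_mul]
    refine Finset.sum_congr rfl fun σ _ => ?_
    have : (B.submatrix (s.1 ∘ σ) id) = (B.submatrix s.1 id).submatrix σ id := rfl
    rw [this, Matrix.det_permute]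
    simp
    ring
  simp_rw [h2]
  rw [← Finset.sum_product']
  symm
  refine Finset.sum_of_injOn (fun p : {s : Fin r → Fin N // StrictMono s} × Equiv.Perm (Fin r) =>
    (p.1.1 ∘ p.2 : Fin r → Fin N)) ?_ ?_ ?_ ?_
  · rintro ⟨⟨s, hs⟩, σ⟩ _ ⟨⟨s', hs'⟩, σ'⟩ _ h
    simp only at h
    have hr : Set.range s = Set.range s' := by
      have := congrArg Set.range h
      simpa [Set.range_comp] using this
    have hss : s = s' := by
      exact (hs.range_inj hs').1 hr
    subst hss
    have : σ = σ' := by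
      ext i
      have := congrFun h i
      simp only [Function.comp] at this
      rw [hs.injective this]
    rw [this]
  · intro p _; simp
  · intro f _ hf
    have : ¬ Function.Injective f := by
      intro hinj
      apply hf
      refine ⟨(⟨f ∘ Tuple.sort f, (Tuple.monotone_sort f).strictMono_of_injective
        (hinj.comp (Tuple.sort f).injective)⟩, (Tuple.sort f)⁻¹), by simp, ?_⟩
      ext i
      simp
    rw [Function.not_injective_iff] at this
    obtain ⟨i, j, hij, hne⟩ := this
    rw [Matrix.det_zero_of_row_eq hne, mul_zero]
    ext k
    simp [hij]
  · intro p _; rfl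

def TPk (f : ℕ → ℕ → ℝ) : Prop := ∀ (r : ℕ) (a b : Fin r → ℕ), StrictMono a → StrictMono b →
  0 ≤ (Matrix.of fun i j => f (a i) (b j)).det

theorem TPk.weak {f : ℕ → ℕ → ℝ} (hf : TPk f) {r : ℕ} (a b : Fin r → ℕ) (ha : Monotone a)
    (hb : StrictMono b) : 0 ≤ (Matrix.of fun i j => f (a i) (b j)).det := by
  by_cases h : Function.Injective a
  · exact hf r a b (ha.strictMono_of_injective h) hb
  · rw [Function.not_injective_iff] at h
    obtain ⟨i, j, hij, hne⟩ := h
    rw [Matrix.det_zero_of_row_eq hne]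
    ext k
    simp [hij]

theorem TPk.comp {f : ℕ → ℕ → ℝ} (hf : TPk f) (φ : ℕ → ℕ) (hφ : Monotone φ) :
    TPk (fun p e => f (φ p) e) := by
  intro r a b ha hb
  exact hf.weak (fun i => φ (a i)) b (hφ.comp ha.monotone) hb

theorem TPk.bidiag {f : ℕ → ℕ → ℝ} (hf : TPk f) (c : ℕ → ℝ) (hc : ∀ p, 0 ≤ c p) :
    TPk (fun p e => f p e + c p * f (p - 1) e) := by
  classical
  intro r a b ha hb
  have : (Matrix.of fun i j => f (a i) (b j) + c (a i) * f (a i - 1) (b j)).det =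
      ∑ s : Finset (Fin r), (Matrix.of (s.piecewise (fun i j => f (a i) (b j))
        (fun i j => c (a i) * f (a i - 1) (b j)))).det := by
    exact (Matrix.detRowAlternating (n := Fin r) (R := ℝ)).toMultilinearMap.map_add_univ
      (fun i j => f (a i) (b j)) (fun i j => c (a i) * f (a i - 1) (b j))
  rw [this]
  refine Finset.sum_nonneg fun s _ => ?_
  have h2 : (Matrix.of (s.piecewise (fun i j => f (a i) (b j))
        (fun i j => c (a i) * f (a i - 1) (b j)))) =
      Matrix.of fun i j => (if i ∈ s then 1 else c (a i)) *
        (Matrix.of fun i j => f (if i ∈ s then a i else a i - 1) (b j)) i j := by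
    ext i j
    by_cases h : i ∈ s <;> simp [h]
  rw [h2, Matrix.det_mul_column]
  refine mul_nonneg (Finset.prod_nonneg fun i _ => ?_) (hf.weak _ b ?_ hb)
  · split_ifs
    · norm_num
    · exact hc _
  · intro i j hij
    rcases hij.eq_or_lt with rfl | hij
    · rfl
    · have := ha hij
      dsimp only
      split_ifs <;> omega

def opl (A : ℕ → ℕ → ℝ) : ℕ → ℕ → ℝ
  | 0, 0 => 1
  | 0, _ + 1 => 0
  | _ + 1, 0 => 0
  | a + 1, b + 1 => A a b

theorem opl_pos (A : ℕ → ℕ → ℝ) {a b : ℕ} (ha : a ≠ 0) (hb : b ≠ 0) :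
    opl A a b = A (a - 1) (b - 1) := by
  obtain ⟨a, rfl⟩ := Nat.exists_eq_succ_of_ne_zero ha
  obtain ⟨b, rfl⟩ := Nat.exists_eq_succ_of_ne_zero hb
  rfl
theorem opl_zl (A : ℕ → ℕ → ℝ) {b : ℕ} (hb : b ≠ 0) : opl A 0 b = 0 := by
  obtain ⟨b, rfl⟩ := Nat.exists_eq_succ_of_ne_zero hb
  rfl
theorem opl_zr (A : ℕ → ℕ → ℝ) {b : ℕ} (hb : b ≠ 0) : opl A b 0 = 0 := by
  obtain ⟨b, rfl⟩ := Nat.exists_eq_succ_of_ne_zero hb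
  rfl

theorem opl_TP_aux {A : ℕ → ℕ → ℝ} (hA : TPk A) {r : ℕ} (a b : Fin r → ℕ) (ha : StrictMono a)
    (hb : StrictMono b) (ha0 : ∀ i, a i ≠ 0) (hb0 : ∀ i, b i ≠ 0) :
    0 ≤ (Matrix.of fun i j => opl A (a i) (b j)).det := by
  have := hA r (fun i => a i - 1) (fun j => b j - 1)
    (fun i j h => by have := ha h; have := ha0 i; dsimp only; omega)
    (fun i j h => by have := hb h; have := hb0 i; dsimp only; omega)
  convert this using 4
  funext j
  exact opl_pos A (ha0 _) (hb0 j)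

theorem TPk.opl {A : ℕ → ℕ → ℝ} (hA : TPk A) : TPk (opl A) := by
  intro r a b ha hb
  cases r with
  | zero => simp
  | succ r =>
    have pos : ∀ {a : Fin (r+1) → ℕ}, StrictMono a → ∀ i : Fin r, a i.succ ≠ 0 := by
      intro a ha i
      have := ha (Fin.succ_pos i)
      omega
    have pos' : ∀ {a : Fin (r+1) → ℕ}, StrictMono a → a 0 ≠ 0 → ∀ i, a i ≠ 0 := by
      intro a ha h i
      have := ha.monotone (Fin.zero_le i)
      omega
    by_cases ha0 : a 0 = 0
    · by_cases hb0 : b 0 = 0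
      · rw [Matrix.det_succ_row_zero, Fin.sum_univ_succ]
        have : ∀ j : Fin r, (Matrix.of fun i j => _root_.opl A (a i) (b j)) 0 j.succ = 0 := by
          intro j
          simp only [Matrix.of_apply, ha0]
          exact opl_zl A (pos hb j)
        simp only [this]
        simp only [mul_zero, zero_mul, Finset.sum_const_zero, add_zero]
        have h1 : (Matrix.of fun i j => _root_.opl A (a i) (b j)) 0 0 = 1 := by
          simp only [Matrix.of_apply, ha0, hb0]; rfl
        rw [h1]
        simp only [Fin.val_zero, pow_zero, one_mul, mul_one]
        exact opl_TP_aux hA (fun i : Fin r => a i.succ) (fun i : Fin r => b i.succ)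
          (ha.comp (Fin.strictMono_succ)) (hb.comp Fin.strictMono_succ) (pos ha) (pos hb)
      · rw [Matrix.det_eq_zero_of_row_eq_zero 0]
        intro j
        simp only [Matrix.of_apply, ha0]
        exact opl_zl A (pos' hb hb0 j)
    · by_cases hb0 : b 0 = 0
      · rw [Matrix.det_eq_zero_of_column_eq_zero 0]
        intro j
        simp only [Matrix.of_apply, hb0]
        exact opl_zr A (pos' ha ha0 j)
      · exact opl_TP_aux hA a b ha hb (pos' ha ha0) (pos' hb hb0)

theorem binom_split (k : ℕ) (F : ℕ → ℝ) :
    ∑ j ∈ range (k + 1 + 1), ((k + 1).choose j : ℝ) * F j =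
    ∑ j ∈ range (k + 1), (k.choose j : ℝ) * F j + ∑ j ∈ range (k + 1), (k.choose j : ℝ) * F (j + 1) := by
  have h1 : ∑ j ∈ range (k + 1), (k.choose j : ℝ) * F j =
      ∑ j ∈ range (k + 1), (k.choose (j + 1) : ℝ) * F (j + 1) + F 0 := by
    have h2 := Finset.sum_range_succ' (fun j => (k.choose j : ℝ) * F j) (k + 1)
    rw [Finset.sum_range_succ] at h2
    simpa using h2
  rw [h1, Finset.sum_range_succ']
  simp only [Nat.choose_succ_succ, Nat.cast_add, add_mul, Finset.sum_add_distrib,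
    Nat.choose_zero_right]
  simp
  ring

/-- Pascal operation on the first rows -/
theorem TPk.pascal {f : ℕ → ℕ → ℝ} (hf : TPk f) (M : ℕ) :
    TPk (fun p e => if p ≤ M then ∑ j ∈ range (p + 1), (p.choose j : ℝ) * f (p - j) e else f p e) := by
  have key : ∀ k, TPk (fun p e => if p ≤ M then
      ∑ j ∈ range (min k p + 1), ((min k p).choose j : ℝ) * f (p - j) e else f p e) := by
    intro k
    induction k with
    | zero => simpa using hf
    | succ k ih =>
      have := ih.bidiag (fun p => if k + 1 ≤ p ∧ p ≤ M then 1 else 0) (by intro p; split_ifs <;> norm_num)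
      convert this using 3 with p e
      by_cases hp : p ≤ M
      · by_cases hk : k + 1 ≤ p
        · have e1 : min (k+1) p = k + 1 := by omega
          have e2 : min k p = k := by omega
          have e3 : min k (p-1) = k := by omega
          have e4 : p - 1 ≤ M := by omega
          simp only [hp, hk, e1, e2, e3, e4, if_true, and_self, one_mul]
          have := binom_split k (fun j => f (p - j) e)
          rw [this]
          have : ∀ x, p - 1 - x = p - (x + 1) := by intro x; omega
          simp only [this]
        · have e1 : min (k+1) p = p := by omega
          have e2 : min k p = p := by omega
          simp [hp, hk, e1, e2]
      · simp [hp]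
  convert key M using 4 with p e h
  · rw [min_eq_right h]

theorem S_binom (p e : ℕ) : ((Nat.stirlingSecond (p + 1) (e + 1) : ℕ) : ℝ) =
    ∑ j ∈ range (p + 1), (p.choose j : ℝ) * (Nat.stirlingSecond (p - j) e : ℕ) := by
  induction p generalizing e with
  | zero =>
    cases e with
    | zero => simp [Nat.stirlingSecond]
    | succ e => simp [Nat.stirlingSecond]
  | succ p ih =>
    rw [binom_split p (fun j => ((Nat.stirlingSecond (p + 1 - j) e : ℕ) : ℝ))]
    have h1 : ∀ j, p + 1 - (j + 1) = p - j := by intro j; omega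
    simp only [h1]
    rw [← ih]
    have h2 : ∀ j ∈ range (p + 1), p + 1 - j = (p - j) + 1 := by
      intro j hj; rw [mem_range] at hj; omega
    cases e with
    | zero =>
      rw [Finset.sum_eq_zero]
      · simp [Nat.stirlingSecond_one_right]
      · intro j hj
        rw [h2 j hj, Nat.stirlingSecond_succ_zero]; simp
    | succ e =>
      have h3 : ∑ j ∈ range (p + 1), (p.choose j : ℝ) * (Nat.stirlingSecond (p + 1 - j) (e + 1) : ℕ)
          = ∑ j ∈ range (p + 1), (((e : ℝ) + 1) * ((p.choose j : ℝ) * (Nat.stirlingSecond (p - j) (e + 1) : ℕ))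
            + (p.choose j : ℝ) * (Nat.stirlingSecond (p - j) e : ℕ)) := by
        refine Finset.sum_congr rfl fun j hj => ?_
        rw [h2 j hj, Nat.stirlingSecond_succ_succ]
        push_cast
        ring
      rw [h3, Finset.sum_add_distrib, ← Finset.mul_sum, ← ih, ← ih, Nat.stirlingSecond_succ_succ]
      push_cast
      ring

noncomputable def gM (M p e : ℕ) : ℝ :=
  if p < M then ((Nat.stirlingSecond p e : ℕ) : ℝ) else
    if M < p - M ∨ e < p - M then 0 else
      ((Nat.stirlingSecond (M - (p - M)) (e - (p - M)) : ℕ) : ℝ)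

theorem gM_le {M p : ℕ} (h : p ≤ M) (e : ℕ) : gM M p e = ((Nat.stirlingSecond p e : ℕ) : ℝ) := by
  unfold gM
  rcases h.lt_or_eq with h | rfl
  · simp [h]
  · simp

theorem gM_TP (M : ℕ) : TPk (gM M) := by
  induction M with
  | zero =>
    have h0 : TPk (fun _ _ => (0 : ℝ)) := by
      intro r a b _ _
      cases r with
      | zero => simp
      | succ r => rw [Matrix.det_eq_zero_of_row_eq_zero 0]; intro j; rfl
    convert h0.opl using 1
    funext p e
    rcases p with _ | p <;> rcases e with _ | e <;> simp [gM, opl]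
  | succ M ih =>
    have hφ : Monotone (fun p => if p ≤ M then p else p - 1) := by
      intro a b h
      dsimp only
      split_ifs <;> omega
    have := ((ih.comp _ hφ).pascal M).opl
    convert this using 1
    funext p e
    rcases p with _ | p
    · rcases e with _ | e <;> simp [gM, opl]
    · rcases e with _ | e
      · simp only [opl]
        unfold gM
        split_ifs with h1 h2
        · simp
        · rfl
        · have : p + 1 - (M + 1) = 0 := by omega
          rw [this]; simp
      · simp only [opl]
        split_ifs with h1
        · rw [gM_le (by omega), S_binom]
          refine Finset.sum_congr rfl fun j hj => ?_
          rw [if_pos (by omega), gM_le (by omega)]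
        · unfold gM
          have c1 : ¬ p + 1 < M + 1 := by omega
          have c2 : ¬ p - 1 < M := by omega
          rw [if_neg c1, if_neg c2]
          by_cases h : M + 1 < p + 1 - (M + 1) ∨ e + 1 < p + 1 - (M + 1)
          · rw [if_pos h, if_pos (by omega)]
          · rw [if_neg h, if_neg (by omega)]
            congr 2 <;> omega

noncomputable def KS (n m : ℕ) : ℝ :=
  if m ≤ n then ((Nat.stirlingSecond n (n - m) : ℕ) : ℝ) else 0

theorem KS_TP : TPk KS := by
  intro r a b ha hb
  obtain ⟨M, hM⟩ : ∃ M, ∀ i, a i ≤ M ∧ b i ≤ M := by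
    refine ⟨∑ i, (a i + b i), fun i => ?_⟩
    have := Finset.single_le_sum (f := fun i => a i + b i) (fun i _ => Nat.zero_le _)
      (Finset.mem_univ i)
    omega
  have ha' : StrictMono (fun i : Fin r => M + (M - a i.rev)) := fun i j hij => by
    have := ha (Fin.rev_lt_rev.2 hij); have := hM i.rev; have := hM j.rev; dsimp only; omega
  have hb' : StrictMono (fun i : Fin r => M - b i.rev) := fun i j hij => by
    have := hb (Fin.rev_lt_rev.2 hij); have := hM i.rev; have := hM j.rev; dsimp only; omega
  have h := gM_TP M r _ _ ha' hb'
  rw [← Matrix.det_submatrix_equiv_self Fin.revPerm]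
  convert h using 2
  ext i j
  simp only [Matrix.submatrix_apply, Matrix.of_apply, Fin.revPerm_apply]
  have h1 := (hM i.rev).1
  have h2 := (hM j.rev).2
  unfold KS gM
  have c1 : ¬ M + (M - a i.rev) < M := by omega
  rw [if_neg c1]
  by_cases hc : b j.rev ≤ a i.rev
  · rw [if_pos hc, if_neg (by omega)]
    congr 2 <;> omega
  · rw [if_neg hc, if_pos (by omega)]

/-- coefficients -/
noncomputable def rho : ℕ → ℕ → ℝ := opl (fun n m => KS (n + 1) (m + 1))

theorem rho_TP : TPk rho := by
  apply TPk.opl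
  intro r a b ha hb
  exact KS_TP r (fun i => a i + 1) (fun j => b j + 1)
    (fun i j h => Nat.succ_lt_succ (ha h)) (fun i j h => Nat.succ_lt_succ (hb h))

theorem signVar_lt_card (n : ℕ) : ∀ P : Polynomial ℝ, P ≠ 0 → P.support.card = n →
    P.signVariations + 1 ≤ n := by
  induction n with
  | zero => intro P hP h; simp at h; exact absurd h hP
  | succ n ih =>
    intro P hP h
    by_cases he : P.eraseLead = 0
    · have : P.signVariations = 0 := by
        have h1 := P.eraseLead_add_monomial_natDegree_leadingCoeff
        rw [he, zero_add] at h1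
        rw [← h1, Polynomial.signVariations_monomial]
      omega
    · have h1 := ih P.eraseLead he (by rw [Polynomial.card_support_eraseLead, h]; rfl)
      have h2 := P.signVariations_le_eraseLead_succ
      omega

theorem gv : ∀ (r : ℕ) (x : Fin r → ℝ) (n : Fin r → ℕ), (∀ i, 0 < x i) → StrictMono x →
    StrictMono n → 0 < (Matrix.of fun i j => x i ^ n j).det := by
  intro r
  induction r with
  | zero => intro x n _ _ _; simp
  | succ r ih =>
    intro x n hx hxm hn
    set x' : Fin r → ℝ := fun i => x i.castSucc with hx'
    have hxm' : StrictMono x' := hxm.comp (Fin.strictMono_castSucc)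
    set c : Fin (r + 1) → ℝ := fun j => (-1) ^ (r + (j : ℕ)) *
      (Matrix.of fun (i : Fin r) (k : Fin r) => x' i ^ n (j.succAbove k)).det with hc
    set P : Polynomial ℝ := ∑ j, Polynomial.C (c j) * Polynomial.X ^ n j with hP
    have heval : ∀ z, P.eval z =
        (Matrix.of fun (i j : Fin (r+1)) => (Fin.snoc x' z : Fin (r+1) → ℝ) i ^ n j).det := by
      intro z
      rw [Matrix.det_succ_row _ (Fin.last r), hP, Polynomial.eval_finsetSum]
      refine Finset.sum_congr rfl fun j _ => ?_
      simp only [hc, Polynomial.eval_mul, Polynomial.eval_C, Polynomial.eval_pow,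
        Polynomial.eval_X, Matrix.of_apply, Fin.snoc_last, Fin.val_last]
      rw [mul_right_comm]
      congr 3
      ext i k
      simp [Fin.succAbove_last]
    have hroot : ∀ i, P.eval (x' i) = 0 := by
      intro i
      rw [heval]
      apply Matrix.det_zero_of_row_eq (Fin.castSucc_lt_last i).ne
      ext k
      simp
    have hcl : 0 < c (Fin.last r) := by
      have := ih x' (fun k => n k.castSucc) (fun i => hx _) hxm' (hn.comp Fin.strictMono_castSucc)
      simp only [hc, Fin.val_last, Fin.succAbove_last, ← two_mul]
      simpa using this
    have hcoeff : ∀ k, P.coeff k = ∑ j, if k = n j then c j else 0 := by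
      intro k
      simp [hP, Polynomial.coeff_X_pow]
    have hcoeffl : P.coeff (n (Fin.last r)) = c (Fin.last r) := by
      rw [hcoeff, Finset.sum_eq_single (Fin.last r)]
      · simp
      · intro j _ hj
        rw [if_neg]
        exact fun h => hj (hn.injective h).symm
      · simp
    have hP0 : P ≠ 0 := by
      intro h
      rw [h] at hcoeffl
      simp at hcoeffl
      exact hcl.ne hcoeffl
    have hsupp : P.support ⊆ Finset.univ.image n := by
      intro k hk
      rw [Polynomial.mem_support_iff, hcoeff] at hk
      by_contra hne
      apply hk
      refine Finset.sum_eq_zero fun j _ => ?_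
      rw [if_neg]
      rintro rfl
      exact hne (Finset.mem_image_of_mem _ (Finset.mem_univ _))
    have hcard : P.support.card ≤ r + 1 := by
      refine (Finset.card_le_card hsupp).trans (Finset.card_image_le.trans ?_)
      simp
    have hdeg : P.natDegree = n (Fin.last r) := by
      apply le_antisymm
      · have h1 := hsupp (Polynomial.natDegree_mem_support_of_nonzero hP0)
        obtain ⟨j, _, hj⟩ := Finset.mem_image.1 h1
        rw [← hj]
        exact hn.monotone (Fin.le_last j)
      · apply Polynomial.le_natDegree_of_ne_zero
        rw [hcoeffl]; exact hcl.ne'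
    have hlead : P.leadingCoeff = c (Fin.last r) := by
      rw [Polynomial.leadingCoeff, hdeg, hcoeffl]
    have hnr : ∀ z, x (Fin.last r) ≤ z → P.eval z ≠ 0 := by
      intro z hz h0
      set y : Fin (r+1) → ℝ := Fin.snoc x' z with hy
      have hyi : Function.Injective y := by
        rw [hy, Fin.snoc_injective_iff]
        refine ⟨hxm'.injective, ?_⟩
        rintro ⟨i, hi⟩
        have := hxm (Fin.castSucc_lt_last i)
        rw [← hi] at hz
        exact absurd hz (not_le.2 this)
      have hyp : ∀ i, 0 < y i ∧ P.eval (y i) = 0 := by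
        intro i
        refine Fin.lastCases ?_ (fun i => ?_) i
        · simp only [hy, Fin.snoc_last]
          exact ⟨(hx _).trans_le hz, h0⟩
        · simp only [hy, Fin.snoc_castSucc]
          exact ⟨hx _, hroot i⟩
      have h1 : (Finset.univ.image y).val ≤ P.roots.filter (0 < ·) := by
        rw [Multiset.le_iff_subset (Finset.nodup _)]
        intro w hw
        obtain ⟨i, _, rfl⟩ := Finset.mem_image.1 (Finset.mem_def.2 hw)
        rw [Multiset.mem_filter, Polynomial.mem_roots hP0]
        exact ⟨(hyp i).2, (hyp i).1⟩
      have h2 := Multiset.card_le_card h1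
      rw [← Multiset.countP_eq_card_filter, Finset.card_val, Finset.card_image_of_injective _ hyi,
        Finset.card_univ, Fintype.card_fin] at h2
      have h3 := P.roots_countP_pos_le_signVariations
      have h4 := signVar_lt_card _ P hP0 rfl
      omega
    have hx_eq : x = Fin.snoc x' (x (Fin.last r)) := by
      ext i
      refine Fin.lastCases ?_ (fun i => ?_) i <;> simp [hx']
    have hfin : 0 < P.eval (x (Fin.last r)) := by
      by_contra hneg
      have hneg := lt_of_le_of_ne (not_lt.1 hneg) (hnr _ le_rfl)
      obtain ⟨z, hz, hzp⟩ : ∃ z, x (Fin.last r) ≤ z ∧ 0 < P.eval z := by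
        by_cases hd : 0 < P.degree
        · have ht := P.tendsto_atTop_of_leadingCoeff_nonneg hd (by rw [hlead]; exact hcl.le)
          exact ((Filter.eventually_ge_atTop _).and (ht.eventually_gt_atTop 0)).exists
        · refine ⟨_, le_rfl, ?_⟩
          rw [Polynomial.eq_C_of_degree_le_zero (not_lt.1 hd), Polynomial.eval_C]
          have : P.natDegree = 0 := Polynomial.natDegree_eq_zero_iff_degree_le_zero.2 (not_lt.1 hd)
          rw [← this]
          change 0 < P.leadingCoeff
          rw [hlead]; exact hcl
      have hiv := intermediate_value_Icc hz (P.continuous.continuousOn)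
      obtain ⟨w, hw, hw0⟩ := hiv ⟨hneg.le, hzp.le⟩
      exact hnr w hw.1 hw0
    rw [heval, ← hx_eq] at hfin
    exact hfin

theorem pow_eq_S (k n : ℕ) : k ^ n =
    ∑ j ∈ range (n + 1), Nat.stirlingSecond n j * k.descFactorial j := by
  induction n with
  | zero => simp
  | succ n ih =>
    have hd : ∀ j, k * k.descFactorial j = k.descFactorial (j + 1) + j * k.descFactorial j := by
      intro j
      rw [Nat.descFactorial_succ]
      by_cases h : j ≤ k
      · rw [← add_mul, Nat.sub_add_cancel h]
      · rw [Nat.descFactorial_eq_zero_iff_lt.2 (by omega)]; simp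
    rw [pow_succ', ih, Finset.mul_sum,
      Finset.sum_range_succ' (fun j => Nat.stirlingSecond (n + 1) j * k.descFactorial j)]
    have h0 : ∑ j ∈ range (n + 1), Nat.stirlingSecond (n + 1) (j + 1) * k.descFactorial (j + 1) =
        ∑ j ∈ range (n + 1), (j + 1) * Nat.stirlingSecond n (j + 1) * k.descFactorial (j + 1) +
        ∑ j ∈ range (n + 1), Nat.stirlingSecond n j * k.descFactorial (j + 1) := by
      rw [← Finset.sum_add_distrib]
      refine Finset.sum_congr rfl fun j _ => ?_
      rw [Nat.stirlingSecond_succ_succ, add_mul]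
    rw [h0, Nat.stirlingSecond_succ_zero, zero_mul, add_zero]
    have h1 : ∑ j ∈ range (n + 1), (j + 1) * Nat.stirlingSecond n (j + 1) * k.descFactorial (j + 1)
        = ∑ j ∈ range (n + 1), j * Nat.stirlingSecond n j * k.descFactorial j := by
      have h2 := Finset.sum_range_succ' (fun j => j * Nat.stirlingSecond n j * k.descFactorial j) (n + 1)
      rw [Finset.sum_range_succ, Nat.stirlingSecond_eq_zero_of_lt (Nat.lt_succ_self n)] at h2
      simp only [mul_zero, zero_mul, add_zero] at h2
      exact h2.symm
    rw [h1, ← Finset.sum_add_distrib]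
    refine Finset.sum_congr rfl fun j _ => ?_
    rw [mul_left_comm, hd]
    ring

theorem hs_congr {f g : ℕ → ℝ} {a b : ℝ} (h : HasSum f a) (hfg : ∀ n, g n = f n) (hab : b = a) :
    HasSum g b := by
  have : g = f := funext hfg
  rw [this, hab]
  exact h

theorem exp_hasSum (y : ℝ) : HasSum (fun k : ℕ => y ^ k / (k.factorial : ℝ)) (Real.exp y) := by
  rw [Real.exp_eq_exp_ℝ]
  exact NormedSpace.expSeries_div_hasSum_exp y

theorem desc_hasSum (y : ℝ) (j : ℕ) :
    HasSum (fun k : ℕ => (k.descFactorial j : ℝ) * (y ^ k / (k.factorial : ℝ))) (y ^ j * Real.exp y) := by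
  rw [← hasSum_nat_add_iff' j]
  rw [Finset.sum_eq_zero, sub_zero]
  · refine hs_congr ((exp_hasSum y).mul_left (y ^ j)) (fun k => ?_) rfl
    have h := Nat.factorial_mul_descFactorial (Nat.le_add_left j k)
    rw [Nat.add_sub_cancel] at h
    rw [← h]
    have h1 : ((k + j).descFactorial j : ℝ) ≠ 0 := by
      rw [Nat.cast_ne_zero, Ne, Nat.descFactorial_eq_zero_iff_lt]; omega
    have h2 : (k.factorial : ℝ) ≠ 0 := by positivity
    push_cast
    field_simp
    ring
  · intro k hk
    rw [Nat.descFactorial_eq_zero_iff_lt.2 (by simpa using hk)]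
    simp

theorem dobinski (y : ℝ) (n : ℕ) :
    HasSum (fun k : ℕ => (k : ℝ) ^ n * (y ^ k / (k.factorial : ℝ)))
      ((∑ j ∈ range (n + 1), (Nat.stirlingSecond n j : ℝ) * y ^ j) * Real.exp y) := by
  have : ∀ k : ℕ, (k : ℝ) ^ n * (y ^ k / (k.factorial : ℝ)) = ∑ j ∈ range (n + 1),
      (Nat.stirlingSecond n j : ℝ) * ((k.descFactorial j : ℝ) * (y ^ k / (k.factorial : ℝ))) := by
    intro k
    have := congrArg (Nat.cast : ℕ → ℝ) (pow_eq_S k n)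
    push_cast at this
    rw [this, Finset.sum_mul]
    simp only [mul_assoc]
  simp only [this]
  rw [Finset.sum_mul]
  refine hasSum_sum fun j _ => ?_
  rw [mul_assoc]
  exact (desc_hasSum y j).mul_left _

theorem touchard {y s : ℝ} (hy : 0 ≤ y) (hs : 0 ≤ s) :
    HasSum (fun n : ℕ => (∑ j ∈ range (n + 1), (Nat.stirlingSecond n j : ℝ) * y ^ j) *
      (s ^ n / (n.factorial : ℝ))) (Real.exp (y * (Real.exp s - 1))) := by
  set f : ℕ × ℕ → ℝ := fun p => (y ^ p.1 / (p.1.factorial : ℝ)) *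
    (((p.1 : ℝ) * s) ^ p.2 / (p.2.factorial : ℝ)) with hf
  have hrow : ∀ k : ℕ, HasSum (fun n => f (k, n))
      ((y * Real.exp s) ^ k / (k.factorial : ℝ)) := by
    intro k
    have := (exp_hasSum ((k : ℝ) * s)).mul_left (y ^ k / (k.factorial : ℝ))
    refine hs_congr this (fun n => rfl) ?_
    rw [mul_pow, Real.exp_nat_mul]
    ring
  have hsum : Summable f := by
    rw [summable_prod_of_nonneg]
    · refine ⟨fun k => (hrow k).summable, ?_⟩
      simp only [(hrow _).tsum_eq]
      exact (exp_hasSum _).summable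
    · intro p
      simp only [hf, Pi.zero_apply]
      positivity
  have htot : HasSum f (Real.exp (y * Real.exp s)) := by
    have h1 := hsum.hasSum
    have h2 := h1.prod_fiberwise hrow
    rw [h2.unique (exp_hasSum _)] at h1
    exact h1
  have hswap : HasSum (fun p : ℕ × ℕ => f p.swap) (Real.exp (y * Real.exp s)) :=
    (Equiv.prodComm ℕ ℕ).hasSum_iff.2 htot
  have hcol : ∀ n : ℕ, HasSum (fun k => f (k, n))
      ((s ^ n / (n.factorial : ℝ)) *
      ((∑ j ∈ range (n + 1), (Nat.stirlingSecond n j : ℝ) * y ^ j) * Real.exp y)) := by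
    intro n
    refine hs_congr ((dobinski y n).mul_left (s ^ n / (n.factorial : ℝ))) (fun k => ?_) rfl
    simp only [hf, mul_pow]
    ring
  have h3 := (hswap.prod_fiberwise hcol).mul_right (Real.exp (-y))
  refine hs_congr h3 (fun n => ?_) ?_
  · show _ = (_ : ℝ)
    have : Real.exp y * Real.exp (-y) = 1 := by rw [← Real.exp_add]; simp
    linear_combination (-(∑ j ∈ range (n + 1), (Nat.stirlingSecond n j : ℝ) * y ^ j) *
      (s ^ n / (n.factorial : ℝ))) * this
  · rw [← Real.exp_add]
    congr 1
    ring

theorem rho_sum (n : ℕ) (l : ℝ) : ∑ m ∈ range (n + 1), rho n m * l ^ m =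
    (∑ m ∈ range (n + 1), KS n m * l ^ m) - 1 + (if n = 0 then 1 else 0) := by
  cases n with
  | zero => simp [rho, opl, KS]
  | succ n =>
    rw [Finset.sum_range_succ', Finset.sum_range_succ' (fun m => KS (n + 1) m * l ^ m)]
    simp [rho, opl, KS, Nat.stirlingSecond_self (n + 1)]

theorem KS_sum (n : ℕ) {l : ℝ} (hl : 0 < l) : ∑ m ∈ range (n + 1), KS n m * l ^ m =
    (∑ j ∈ range (n + 1), (Nat.stirlingSecond n j : ℝ) * (1 / l) ^ j) * l ^ n := by
  rw [← Finset.sum_range_reflect, Finset.sum_mul]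
  refine Finset.sum_congr rfl fun j hj => ?_
  rw [mem_range] at hj
  have h1 : n + 1 - 1 - j = n - j := by omega
  have h2 : n - (n - j) = j := by omega
  have h3 : l ^ n = l ^ (n - j) * l ^ j := by rw [← pow_add]; congr 1; omega
  have h4 : (1 / l) ^ j * l ^ j = 1 := by
    rw [← mul_pow, one_div, inv_mul_cancel₀ hl.ne', one_pow]
  have h5 : n - j ≤ n := by omega
  rw [h1, KS, if_pos h5, h2, h3]
  linear_combination (-(Nat.stirlingSecond n j : ℝ) * l ^ (n - j)) * h4

theorem w_hasSum {l t : ℝ} (hl : 0 < l) (ht : 0 ≤ t) :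
    HasSum (fun n : ℕ => (∑ m ∈ range (n + 1), rho n m * l ^ m) * (t ^ n / (n.factorial : ℝ)))
      (Real.exp ((Real.exp (l * t) - 1) / l) - (Real.exp t - 1)) := by
  have h1 := touchard (y := 1 / l) (s := l * t) (by positivity) (by positivity)
  have h2 := exp_hasSum t
  have h3 : HasSum (fun n : ℕ => (if n = 0 then (1 : ℝ) else 0)) 1 := hasSum_ite_eq 0 1
  have h4 := (h1.sub h2).add h3
  refine hs_congr h4 (fun n => ?_) ?_
  · show _ = (_ : ℝ)
    rw [rho_sum, KS_sum n hl, mul_pow]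
    by_cases hn : n = 0
    · subst hn; simp
    · simp only [hn, if_false]
      ring
  · have : (Real.exp (l * t) - 1) / l = 1 / l * (Real.exp (l * t) - 1) := by ring
    rw [this]
    ring

theorem rho_zero_of_lt {n m : ℕ} (h : n < m) : rho n m = 0 := by
  obtain ⟨m, rfl⟩ := Nat.exists_eq_succ_of_ne_zero (by omega : m ≠ 0)
  cases n with
  | zero => rfl
  | succ n =>
    change KS (n + 1) (m + 1) = 0
    rw [KS, if_neg (by omega)]

def u0 (i : ℕ) : ℕ := if i = 0 then 0 else i + 1

theorem u0_mono : StrictMono u0 := by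
  intro i j h
  unfold u0
  split_ifs <;> omega

theorem rho_u0_diag (i : ℕ) : rho (u0 i) i = 1 := by
  cases i with
  | zero => rfl
  | succ i =>
    change KS (i + 1 + 1) (i + 1) = 1
    rw [KS, if_pos (by omega)]
    have : i + 1 + 1 - (i + 1) = 1 := by omega
    rw [this, Nat.stirlingSecond_one_right]
    simp

theorem rho_u0_lt {i j : ℕ} (h : i < j) : rho (u0 i) j = 0 := by
  cases i with
  | zero => exact rho_zero_of_lt h
  | succ i =>
    by_cases hj : j = i + 2
    · subst hj
      change KS (i + 2) (i + 2) = 0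
      simp [KS]
    · exact rho_zero_of_lt (by simp only [u0]; split_ifs <;> omega)

theorem rho_det_u0 (r : ℕ) : (Matrix.of fun i j : Fin r => rho (u0 i) j).det = 1 := by
  rw [Matrix.det_of_lowerTriangular]
  · exact Finset.prod_eq_one fun i _ => rho_u0_diag i
  · intro i j h
    exact rho_u0_lt h

noncomputable def Cdet {r : ℕ} (s u : Fin r → ℕ) : ℝ :=
  (Matrix.of fun i j : Fin r => rho (u j) (s i) / ((u j).factorial : ℝ)).det

theorem Cdet_eq {r : ℕ} (s u : Fin r → ℕ) : Cdet s u =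
    (∏ j, (1 / ((u j).factorial : ℝ))) * (Matrix.of fun i j : Fin r => rho (u i) (s j)).det := by
  rw [← Matrix.det_transpose (Matrix.of fun i j : Fin r => rho (u i) (s j)), ← Matrix.det_mul_row, Cdet]
  congr 1
  ext i j
  simp only [Matrix.of_apply, Matrix.transpose_apply]
  ring

theorem Cdet_nonneg {r : ℕ} (s u : Fin r → ℕ) (hs : StrictMono s) (hu : StrictMono u) :
    0 ≤ Cdet s u := by
  rw [Cdet_eq]
  exact mul_nonneg (Finset.prod_nonneg fun i _ => by positivity) (rho_TP r u s hu hs)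

theorem Cdet_pos (r : ℕ) : 0 < Cdet (fun i : Fin r => (i : ℕ)) (fun i : Fin r => u0 i) := by
  rw [Cdet_eq, rho_det_u0, mul_one]
  exact Finset.prod_pos fun i _ => by positivity

noncomputable def WN {r : ℕ} (N : ℕ) (l t : Fin r → ℝ) : Matrix (Fin r) (Fin r) ℝ :=
  (Matrix.of fun (i : Fin r) (m : Fin N) => l i ^ (m : ℕ)) *
  ((Matrix.of fun (m n : Fin N) => rho n m / ((n : ℕ).factorial : ℝ)) *
  (Matrix.of fun (n : Fin N) (j : Fin r) => t j ^ (n : ℕ)))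

theorem WN_det {r : ℕ} (N : ℕ) (l t : Fin r → ℝ) : (WN N l t).det =
    ∑ s : {s : Fin r → Fin N // StrictMono s}, ∑ u : {s : Fin r → Fin N // StrictMono s},
      (Matrix.of fun i j : Fin r => l i ^ (s.1 j : ℕ)).det *
      (Cdet (fun i => (s.1 i : ℕ)) (fun i => (u.1 i : ℕ)) *
      (Matrix.of fun i j : Fin r => t i ^ (u.1 j : ℕ)).det) := by
  rw [WN, cauchyBinet]
  refine Finset.sum_congr rfl fun s _ => ?_
  rw [← Finset.mul_sum]
  congr 1
  rw [Matrix.submatrix_mul _ _ s.1 id id Function.bijective_id, cauchyBinet]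
  refine Finset.sum_congr rfl fun u _ => ?_
  congr 1
  rw [← Matrix.det_transpose]
  rfl

theorem WN_ge {r : ℕ} {N : ℕ} (hN : r < N) (l t : Fin r → ℝ) (hl : ∀ i, 0 < l i)
    (ht : ∀ i, 0 < t i) (hlm : StrictMono l) (htm : StrictMono t) :
    (Matrix.of fun i j : Fin r => l i ^ (j : ℕ)).det *
      (Cdet (fun i : Fin r => (i : ℕ)) (fun i : Fin r => u0 i) *
      (Matrix.of fun i j : Fin r => t i ^ (u0 j)).det) ≤ (WN N l t).det := by
  rw [WN_det]
  have hnn : ∀ s u : {s : Fin r → Fin N // StrictMono s},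
      0 ≤ (Matrix.of fun i j : Fin r => l i ^ (s.1 j : ℕ)).det *
      (Cdet (fun i => (s.1 i : ℕ)) (fun i => (u.1 i : ℕ)) *
      (Matrix.of fun i j : Fin r => t i ^ (u.1 j : ℕ)).det) := by
    intro s u
    have hs : StrictMono (fun i => (s.1 i : ℕ)) := fun i j h => s.2 h
    have hu : StrictMono (fun i => (u.1 i : ℕ)) := fun i j h => u.2 h
    exact mul_nonneg (gv r l _ hl hlm hs).le
      (mul_nonneg (Cdet_nonneg _ _ hs hu) (gv r t _ ht htm hu).le)
  let s0 : {s : Fin r → Fin N // StrictMono s} := ⟨fun i => ⟨i, by omega⟩, fun i j h => h⟩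
  let v0 : {s : Fin r → Fin N // StrictMono s} :=
    ⟨fun i => ⟨u0 i, by unfold u0; split_ifs <;> omega⟩, fun i j h => u0_mono h⟩
  have h1 := Finset.single_le_sum (f := fun s : {s : Fin r → Fin N // StrictMono s} =>
    ∑ u : {s : Fin r → Fin N // StrictMono s},
      (Matrix.of fun i j : Fin r => l i ^ (s.1 j : ℕ)).det *
      (Cdet (fun i => (s.1 i : ℕ)) (fun i => (u.1 i : ℕ)) *
      (Matrix.of fun i j : Fin r => t i ^ (u.1 j : ℕ)).det))
    (fun s _ => Finset.sum_nonneg fun u _ => hnn s u) (Finset.mem_univ s0)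
  have h2 := Finset.single_le_sum (f := fun u : {s : Fin r → Fin N // StrictMono s} =>
      (Matrix.of fun i j : Fin r => l i ^ (s0.1 j : ℕ)).det *
      (Cdet (fun i => (s0.1 i : ℕ)) (fun i => (u.1 i : ℕ)) *
      (Matrix.of fun i j : Fin r => t i ^ (u.1 j : ℕ)).det))
    (fun u _ => hnn s0 u) (Finset.mem_univ v0)
  exact h2.trans h1

theorem WN_apply {r : ℕ} (N : ℕ) (l t : Fin r → ℝ) (i j : Fin r) : WN N l t i j =
    ∑ n ∈ range N, (∑ m ∈ range (n + 1), rho n m * l i ^ m) * (t j ^ n / (n.factorial : ℝ)) := by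
  simp only [WN, Matrix.mul_apply, Matrix.of_apply]
  have : ∀ m : ℕ, ∑ n : Fin N, rho n m / ((n : ℕ).factorial : ℝ) * t j ^ (n : ℕ) =
      ∑ n ∈ range N, rho n m / ((n : ℕ).factorial : ℝ) * t j ^ (n : ℕ) := fun m =>
    Fin.sum_univ_eq_sum_range (fun n => rho n m / ((n : ℕ).factorial : ℝ) * t j ^ n) N
  simp only [this]
  rw [Fin.sum_univ_eq_sum_range (fun m => l i ^ m *
    ∑ n ∈ range N, rho n m / ((n : ℕ).factorial : ℝ) * t j ^ (n : ℕ)) N]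
  simp only [Finset.mul_sum]
  rw [Finset.sum_comm]
  refine Finset.sum_congr rfl fun n hn => ?_
  rw [mem_range] at hn
  rw [Finset.sum_mul]
  symm
  have hsub : range (n + 1) ⊆ range N := by
    intro k hk; rw [mem_range] at *; omega
  have := Finset.sum_subset (f := fun m => rho n m * l i ^ m * (t j ^ n / (n.factorial : ℝ))) hsub
    (by
      intro k _ hk
      rw [mem_range, not_lt] at hk
      rw [rho_zero_of_lt hk]
      ring)
  rw [this]
  refine Finset.sum_congr rfl fun m _ => ?_
  ring

theorem main_pos {r : ℕ} (l t : Fin r → ℝ) (hl : ∀ i, 0 < l i)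
    (ht : ∀ i, 0 < t i) (hlm : StrictMono l) (htm : StrictMono t) :
    0 < (Matrix.of fun i j : Fin r =>
      Real.exp ((Real.exp (l i * t j) - 1) / l i) - (Real.exp (t j) - 1)).det := by
  have hlim : Filter.Tendsto (fun N => (WN N l t).det) Filter.atTop
      (nhds (Matrix.of fun i j : Fin r =>
      Real.exp ((Real.exp (l i * t j) - 1) / l i) - (Real.exp (t j) - 1)).det) := by
    have hc : Continuous (fun M : Matrix (Fin r) (Fin r) ℝ => M.det) := continuous_id.matrix_det
    refine (hc.tendsto _).comp ?_
    refine tendsto_pi_nhds.2 fun i => tendsto_pi_nhds.2 fun j => ?_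
    have h := (w_hasSum (hl i) (ht j).le).tendsto_sum_nat
    refine h.congr fun N => ?_
    exact (WN_apply N l t i j).symm
  have hge := ge_of_tendsto hlim ((Filter.eventually_gt_atTop r).mono
    fun N hN => WN_ge hN l t hl ht hlm htm)
  refine lt_of_lt_of_le ?_ hge
  have h1 := gv r l (fun j => (j : ℕ)) hl hlm (fun i j h => h)
  have h2 := gv r t (fun j => u0 j) ht htm (fun i j h => u0_mono h)
  exact mul_pos h1 (mul_pos (Cdet_pos r) h2)

end Aux

/-- Strict total positivity of the weight function. -/
theorem stmt_16 :
    ∀ r : ℕ, 1 ≤ r → ∀ lam x : Fin r → ℝ,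
      (∀ i : Fin r, 0 < lam i) → (∀ j : Fin r, 0 < x j) →
      (∀ i j : Fin r, i < j → lam j < lam i) →
      (∀ i j : Fin r, i < j → x j < x i) →
      0 < Matrix.det (Matrix.of fun i j : Fin r =>
        Real.exp (((1 + x j) ^ (lam i) - 1) / lam i) - x j) := by
  intro r _ lam x hlam hx hlm hxm
  have hl' : StrictMono (fun i : Fin r => lam i.rev) :=
    fun i j h => hlm _ _ (Fin.rev_lt_rev.2 h)
  have ht' : StrictMono (fun i : Fin r => Real.log (1 + x i.rev)) :=
    fun i j h => Real.log_lt_log (by have := hx i.rev; linarith)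
      (by have := hxm _ _ (Fin.rev_lt_rev.2 h); linarith)
  have h := main_pos _ _ (fun i => hlam i.rev)
    (fun i => Real.log_pos (by have := hx i.rev; linarith)) hl' ht'
  rw [← Matrix.det_submatrix_equiv_self Fin.revPerm]
  convert h using 2
  ext i j
  have hp : 0 < 1 + x j.rev := by have := hx j.rev; linarith
  simp only [Matrix.submatrix_apply, Matrix.of_apply, Fin.revPerm_apply]
  rw [Real.exp_log hp, Real.rpow_def_of_pos hp, mul_comm (Real.log _)]
  ring
end

section
/- The weight function w₅(λ,x) = ((1+λ)^x − 1)/(λx) is strictly totally positive of order infinity on (0,∞)²: for every r ≥ 1 and all λ₁ > λ₂ > ⋯ > λ_r > 0 and x₁ > x₂ > ⋯ > x_r > 0, the r×r determinant det( (w₅(λ_i,x_j))_{i,j=1}^r ) is strictly positive. -/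
theorem det_diff_pos {n : ℕ} (f f' : Fin n → ℝ → ℝ)
    (hf : ∀ i u, HasDerivAt (f i) (f' i u) u)
    (H : ∀ t : Fin n → ℝ, StrictMono t → 0 < Matrix.det (Matrix.of fun i j => f' i (t j)))
    (x : Fin (n + 1) → ℝ) (hx : StrictMono x) :
    0 < Matrix.det (Matrix.of fun i j : Fin n => f i (x j.succ) - f i (x j.castSucc)) := by
  have key : ∀ k : ℕ, k ≤ n → ∀ t : Fin n → ℝ,
      (∀ j : Fin n, x j.castSucc < t j ∧ t j < x j.succ) →
      0 < Matrix.det (Matrix.of fun i j : Fin n =>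
        if (j : ℕ) < k then f i (x j.succ) - f i (x j.castSucc) else f' i (t j)) := by
    intro k
    induction k with
    | zero =>
      intro _ t ht
      simp only [Nat.not_lt_zero, if_false]
      apply H
      intro i j hij
      have h1 : x i.succ ≤ x j.castSucc := by
        apply hx.monotone
        rw [Fin.le_def]
        simp only [Fin.val_succ, Fin.val_castSucc]
        exact hij
      linarith [(ht i).2, (ht j).1]
    | succ k ih =>
      intro hk t ht
      let c : Fin n := ⟨k, hk⟩
      let M : Matrix (Fin n) (Fin n) ℝ := Matrix.of fun i j : Fin n =>
        if (j : ℕ) < k then f i (x j.succ) - f i (x j.castSucc) else f' i (t j)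
      have lin : ∀ b : Fin n → ℝ, (M.updateCol c b).det = ∑ i, M.adjugate c i * b i := by
        intro b
        rw [← Matrix.cramer_apply, Matrix.cramer_eq_adjugate_mulVec]
        rfl
      have hlt : x c.castSucc < x c.succ := hx Fin.castSucc_lt_succ
      have hg : ∀ u, HasDerivAt (fun u => ∑ i, M.adjugate c i * f i u)
          (∑ i, M.adjugate c i * f' i u) u := by
        intro u
        apply HasDerivAt.fun_sum
        intro i _
        exact (hf i u).const_mul _
      obtain ⟨u, hu, hs⟩ := exists_hasDerivAt_eq_slope _ _ hlt
        (fun v _ => (hg v).continuousAt.continuousWithinAt) (fun v _ => hg v)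
      have hp := ih (by omega) (Function.update t c u) (by
        intro j
        by_cases hj : j = c
        · subst hj; simpa using hu
        · simpa [Function.update_of_ne hj] using ht j)
      have e1 : (Matrix.of fun i j : Fin n =>
          if (j : ℕ) < k then f i (x j.succ) - f i (x j.castSucc)
            else f' i (Function.update t c u j)) = M.updateCol c (fun i => f' i u) := by
        ext i j
        by_cases hj : j = c
        · subst hj; simp [c]
        · simp [M, Matrix.updateCol_ne hj, Function.update_of_ne hj]
      have e2 : (Matrix.of fun i j : Fin n =>
          if (j : ℕ) < k + 1 then f i (x j.succ) - f i (x j.castSucc)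
            else f' i (t j)) = M.updateCol c (fun i => f i (x c.succ) - f i (x c.castSucc)) := by
        ext i j
        by_cases hj : j = c
        · subst hj; simp [c]
        · have : (j : ℕ) ≠ k := fun h => hj (Fin.ext h)
          have h2 : (j : ℕ) < k + 1 ↔ (j : ℕ) < k := by omega
          simp only [M, Matrix.updateCol_ne hj, h2, Matrix.of_apply]
      rw [e1, lin, hs] at hp
      rw [e2, lin]
      simp only [mul_sub, Finset.sum_sub_distrib]
      have := (div_pos_iff_of_pos_right (sub_pos.2 hlt)).1 hp
      exact this
  have := key n le_rfl (fun j => (x j.castSucc + x j.succ) / 2) (by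
    intro j
    have : x j.castSucc < x j.succ := hx Fin.castSucc_lt_succ
    constructor <;> linarith)
  simpa using this

theorem det_exp_pos : ∀ (n : ℕ) (a x : Fin n → ℝ), StrictMono a → StrictMono x →
    0 < Matrix.det (Matrix.of fun i j : Fin n => Real.exp (a i * x j)) := by
  intro n
  induction n with
  | zero => intro a x _ _; simp
  | succ n ih =>
    intro a x ha hx
    let A : Matrix (Fin (n + 1)) (Fin (n + 1)) ℝ :=
      Matrix.of fun i j => Real.exp ((a i - a 0) * x j)
    have e0 : (Matrix.of fun i j : Fin (n + 1) => Real.exp (a i * x j)) =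
        Matrix.of fun i j => Real.exp (a 0 * x j) * A i j := by
      ext i j
      simp only [A, Matrix.of_apply, ← Real.exp_add]
      congr 1; ring
    rw [e0, Matrix.det_mul_row]
    apply mul_pos (Finset.prod_pos fun i _ => Real.exp_pos _)
    let B : Matrix (Fin (n + 1)) (Fin (n + 1)) ℝ :=
      Matrix.of fun i j => Fin.cases (A i 0) (fun j => A i j.succ - A i j.castSucc) j
    have e1 : A.det = B.det := by
      apply Matrix.det_eq_of_forall_col_eq_smul_add_pred (fun _ => 1)
      · intro i; simp [B]
      · intro i j; simp [B]
    have e2 : B.det = (Matrix.of fun i j : Fin n =>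
        Real.exp ((a i.succ - a 0) * x j.succ) -
          Real.exp ((a i.succ - a 0) * x j.castSucc)).det := by
      rw [Matrix.det_succ_row_zero, Fin.sum_univ_succ]
      have : ∀ j : Fin n, B 0 j.succ = 0 := by intro j; simp [B, A]
      simp only [this]
      simp only [mul_zero, zero_mul, Finset.sum_const_zero, add_zero]
      have : B 0 0 = 1 := by simp [B, A]
      rw [this]
      simp only [Fin.val_zero, pow_zero, one_mul]
      congr 1
    rw [e1, e2]
    apply det_diff_pos (fun i u => Real.exp ((a i.succ - a 0) * u))
      (fun i u => (a i.succ - a 0) * Real.exp ((a i.succ - a 0) * u)) _ _ x hx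
    · intro i u
      have := ((hasDerivAt_id u).const_mul (a i.succ - a 0)).exp
      simpa [mul_comm] using this
    · intro t ht
      have := Matrix.det_mul_column (fun i : Fin n => a i.succ - a 0)
        (Matrix.of fun i j : Fin n => Real.exp ((a i.succ - a 0) * t j))
      simp only [Matrix.of_apply] at this
      rw [this]
      apply mul_pos
      · exact Finset.prod_pos fun i _ => sub_pos.2 (ha (Fin.succ_pos i))
      · apply ih _ t _ ht
        intro i j hij
        have := ha (Fin.succ_lt_succ_iff.2 hij)
        simp only
        linarith

theorem strictMono_cons_zero {n : ℕ} (a : Fin n → ℝ) (ha : StrictMono a) (h0 : ∀ i, 0 < a i) :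
    StrictMono (Fin.cons 0 a : Fin (n + 1) → ℝ) := by
  intro i j hij
  induction j using Fin.cases with
  | zero => exact absurd hij (Fin.not_lt_zero _)
  | succ j =>
    induction i using Fin.cases with
    | zero => simpa using h0 j
    | succ i => simpa using ha (Fin.succ_lt_succ_iff.1 hij)

theorem det_exp_sub_one_pos (n : ℕ) (a x : Fin n → ℝ) (ha : StrictMono a) (hx : StrictMono x)
    (ha0 : ∀ i, 0 < a i) (hx0 : ∀ i, 0 < x i) :
    0 < Matrix.det (Matrix.of fun i j : Fin n => Real.exp (a i * x j) - 1) := by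
  have h := det_exp_pos (n + 1) _ _ (strictMono_cons_zero a ha ha0)
    (strictMono_cons_zero x hx hx0)
  let A : Matrix (Fin (n + 1)) (Fin (n + 1)) ℝ := Matrix.of fun i j =>
    Real.exp ((Fin.cons 0 a : Fin (n + 1) → ℝ) i * (Fin.cons 0 x : Fin (n + 1) → ℝ) j)
  let B : Matrix (Fin (n + 1)) (Fin (n + 1)) ℝ :=
    Matrix.of fun i j => Fin.cases (A 0 j) (fun i => A i.succ j - A 0 j) i
  have e1 : A.det = B.det := by
    apply Matrix.det_eq_of_forall_row_eq_smul_add_const (Fin.cons 0 fun _ => 1) 0 (by simp)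
    intro i j
    induction i using Fin.cases with
    | zero => simp [B]
    | succ i => simp [B]
  have e2 : B.det = (Matrix.of fun i j : Fin n => Real.exp (a i * x j) - 1).det := by
    rw [Matrix.det_succ_column_zero, Fin.sum_univ_succ]
    have : ∀ j : Fin n, B j.succ 0 = 0 := by intro j; simp [B, A]
    simp only [this]
    simp only [mul_zero, zero_mul, Finset.sum_const_zero, add_zero]
    have : B 0 0 = 1 := by simp [B, A]
    rw [this]
    simp only [Fin.val_zero, pow_zero, one_mul]
    congr 1
    ext i j
    simp [B, A]
  rw [← e2, ← e1]
  exact h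

/-- The weight function `w₅(λ,x) = ((1+λ)^x − 1)/(λx)` is strictly
totally positive of order infinity on `(0,∞)²` (with `(1+λ)^x` the real power
`exp(x log(1+λ))`). -/
theorem stmt_17 :
    ∀ r : ℕ, 1 ≤ r → ∀ lam x : Fin r → ℝ,
      (∀ i : Fin r, 0 < lam i) → (∀ j : Fin r, 0 < x j) →
      (∀ i j : Fin r, i < j → lam j < lam i) →
      (∀ i j : Fin r, i < j → x j < x i) →
      0 < Matrix.det (Matrix.of fun i j : Fin r =>
        ((1 + lam i) ^ (x j) - 1) / (lam i * x j)) := by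
  intro r _ lam x hl hx hlm hxm
  have h := det_exp_sub_one_pos r (fun i => Real.log (1 + lam i.rev)) (fun j => x j.rev)
    (fun i j hij => Real.log_lt_log (by linarith [hl i.rev])
      (by linarith [hlm _ _ (Fin.rev_lt_rev.2 hij)]))
    (fun i j hij => hxm _ _ (Fin.rev_lt_rev.2 hij))
    (fun i => Real.log_pos (by linarith [hl i.rev])) (fun j => hx _)
  rw [← Matrix.det_submatrix_equiv_self Fin.revPerm]
  have e : ((Matrix.of fun i j : Fin r =>
        ((1 + lam i) ^ (x j) - 1) / (lam i * x j)).submatrix Fin.revPerm Fin.revPerm) =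
      Matrix.of fun i j => (lam i.rev)⁻¹ * (Matrix.of fun i j => (x j.rev)⁻¹ *
        (Matrix.of fun i j : Fin r =>
          Real.exp (Real.log (1 + lam i.rev) * x j.rev) - 1) i j) i j := by
    ext i j
    have h1 := hl i.rev
    have h2 := hx j.rev
    simp only [Matrix.submatrix_apply, Matrix.of_apply, Fin.revPerm_apply]
    rw [Real.rpow_def_of_pos (by linarith)]
    field_simp
  rw [e, Matrix.det_mul_column, Matrix.det_mul_row]
  exact mul_pos (Finset.prod_pos fun i _ => inv_pos.2 (hl _))
    (mul_pos (Finset.prod_pos fun i _ => inv_pos.2 (hx _)) h)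
end

section
/- The weight function w₇(λ,x) = [log(1+λ+x)/(λ+x)] · [x/log(1+x)] is strictly totally positive of order infinity on (0,∞)²: for every r ≥ 1 and all λ₁ > λ₂ > ⋯ > λ_r > 0 and x₁ > x₂ > ⋯ > x_r > 0, the r×r determinant det( (w₇(λ_i,x_j))_{i,j=1}^r ) is strictly positive. -/
open MeasureTheory Set

/-- Exponential sums have fewer zeros than terms. -/
lemma expsum_zero {ι : Type*} [DecidableEq ι] (s : Finset ι) :
    ∀ (a c : ι → ℝ), (∀ i ∈ s, ∀ j ∈ s, a i = a j → i = j) →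
    ∀ (n : ℕ) (z : Fin n → ℝ), StrictMono z → s.card ≤ n →
    (∀ k, ∑ i ∈ s, c i * Real.exp (a i * z k) = 0) → ∀ i ∈ s, c i = 0 := by
  induction s using Finset.induction_on with
  | empty => simp
  | insert i0 s hi0 ih =>
    intro a c ha n z hz hn hzero
    rw [Finset.card_insert_of_notMem hi0] at hn
    obtain ⟨m, rfl⟩ : ∃ m, n = m + 1 := ⟨n - 1, by omega⟩
    let h : ℝ → ℝ := fun u => c i0 + ∑ i ∈ s, c i * Real.exp ((a i - a i0) * u)
    let h' : ℝ → ℝ := fun u => ∑ i ∈ s, c i * (Real.exp ((a i - a i0) * u) * (a i - a i0))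
    have hd : ∀ u, HasDerivAt h (h' u) u := by
      intro u
      refine HasDerivAt.const_add _ (HasDerivAt.fun_sum fun i _ => ?_)
      refine HasDerivAt.const_mul _ (HasDerivAt.exp ?_)
      simpa using (hasDerivAt_id u).const_mul (a i - a i0)
    have hh : ∀ k, h (z k) = 0 := by
      intro k
      have h1 := hzero k
      rw [Finset.sum_insert hi0] at h1
      have h2 : h (z k) = Real.exp (-(a i0 * z k)) *
          (c i0 * Real.exp (a i0 * z k) + ∑ i ∈ s, c i * Real.exp (a i * z k)) := by
        simp only [h]
        rw [mul_add, Finset.mul_sum]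
        congr 1
        · rw [mul_left_comm, ← Real.exp_add]; simp
        · refine Finset.sum_congr rfl fun i _ => ?_
          rw [mul_left_comm, ← Real.exp_add]; congr 2; ring
      rw [h2, h1, mul_zero]
    have hr : ∀ k : Fin m, ∃ y ∈ Ioo (z k.castSucc) (z k.succ), h' y = 0 := by
      intro k
      refine exists_hasDerivAt_eq_zero (hz k.castSucc_lt_succ) ?_ ?_ (fun x _ => hd x)
      · exact fun x _ => (hd x).continuousAt.continuousWithinAt
      · rw [hh, hh]
    choose y hy hy0 using hr
    have hym : StrictMono y := by
      intro k l hkl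
      have h1 : z k.succ ≤ z l.castSucc := hz.monotone (by
        rw [Fin.le_def]; simp; exact hkl)
      linarith [(hy k).2, (hy l).1]
    have key := ih a (fun i => c i * (a i - a i0))
      (fun i hi j hj => ha i (Finset.mem_insert_of_mem hi) j (Finset.mem_insert_of_mem hj))
      m y hym (by omega) (by
        intro k
        have h1 := hy0 k
        have h2 : ∑ i ∈ s, c i * (a i - a i0) * Real.exp (a i * y k)
            = Real.exp (a i0 * y k) * h' (y k) := by
          simp only [h']
          rw [Finset.mul_sum]
          refine Finset.sum_congr rfl fun i _ => ?_
          have : Real.exp (a i * y k) =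
            Real.exp (a i0 * y k) * Real.exp ((a i - a i0) * y k) := by
            rw [← Real.exp_add]; congr 1; ring
          rw [this]; ring
        rw [h2, h1, mul_zero])
    have hs : ∀ i ∈ s, c i = 0 := by
      intro i hi
      rcases mul_eq_zero.1 (key i hi) with h1 | h1
      · exact h1
      · exfalso
        have := ha i (Finset.mem_insert_of_mem hi) i0 (Finset.mem_insert_self _ _) (by linarith)
        exact hi0 (this ▸ hi)
    intro i hi
    rcases Finset.mem_insert.1 hi with rfl | hi
    · have h1 := hh 0
      simp only [h] at h1
      rw [Finset.sum_eq_zero (fun j hj => by rw [hs j hj, zero_mul]), add_zero] at h1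
      exact h1
    · exact hs i hi

/-- The exponential matrix. -/
noncomputable def expMat {r : ℕ} (lam u : Fin r → ℝ) : Matrix (Fin r) (Fin r) ℝ :=
  Matrix.of fun i j => Real.exp (-lam i * u j)

lemma expMat_det_ne {r : ℕ} (lam u : Fin r → ℝ) (hl : Function.Injective lam)
    (hu : Function.Injective u) : (expMat lam u).det ≠ 0 := by
  intro h0
  obtain ⟨c, hc, hv⟩ := Matrix.exists_vecMul_eq_zero_iff.2 h0
  apply hc
  have hcard : (Finset.univ.image u).card = r := by
    rw [Finset.card_image_of_injective _ hu]; simp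
  have := expsum_zero Finset.univ (fun i => -lam i) c
    (fun i _ j _ hij => hl (neg_injective hij)) r ((Finset.univ.image u).orderEmbOfFin hcard)
    (OrderEmbedding.strictMono _) (by simp) (by
      intro k
      have hm := Finset.orderEmbOfFin_mem (Finset.univ.image u) hcard k
      obtain ⟨j, -, hj⟩ := Finset.mem_image.1 hm
      rw [← hj]
      have := congrFun hv j
      simpa [Matrix.vecMul, dotProduct, expMat] using this)
  funext i
  exact this i (Finset.mem_univ _)

lemma expMat_mul_pos {r : ℕ} (lam x u : Fin r → ℝ) (hl : StrictAnti lam) (hx : StrictAnti x)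
    (hu : Function.Injective u) : 0 < (expMat lam u).det * (expMat x u).det := by
  let p : ℝ → Fin r → ℝ := fun t i => (1 - t) * lam i + t * x i
  let h : ℝ → ℝ := fun t => (expMat (p t) u).det
  have hc : Continuous h := by
    refine Continuous.matrix_det ?_
    refine continuous_matrix fun i j => ?_
    simp only [expMat, Matrix.of_apply, p]
    fun_prop
  have hne : ∀ t ∈ Icc (0 : ℝ) 1, h t ≠ 0 := by
    intro t ht
    refine expMat_det_ne _ _ ?_ hu
    refine StrictAnti.injective (fun i j hij => ?_)
    have h1 := hl hij
    have h2 := hx hij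
    simp only [p]
    rcases eq_or_lt_of_le ht.1 with h | h
    · subst h; simpa using h1
    · nlinarith [ht.2, mul_lt_mul_of_pos_left h2 h,
        mul_le_mul_of_nonneg_left h1.le (sub_nonneg.2 ht.2)]
  have e0 : h 0 = (expMat lam u).det := by simp [h, p]
  have e1 : h 1 = (expMat x u).det := by simp [h, p]
  rw [← e0, ← e1]
  by_contra hneg
  have hz : (0 : ℝ) ∈ uIcc (h 0) (h 1) := by
    rw [mem_uIcc]
    rcases mul_nonpos_iff.1 (not_lt.1 hneg) with h | h
    · exact Or.inr ⟨h.2, h.1⟩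
    · exact Or.inl h
  obtain ⟨t, ht, ht0⟩ := intermediate_value_uIcc (a := (0:ℝ)) (b := 1) hc.continuousOn hz
  rw [uIcc_of_le zero_le_one] at ht
  exact hne t ht ht0

lemma expMat_mul_nonneg {r : ℕ} (lam x u : Fin r → ℝ) (hl : StrictAnti lam) (hx : StrictAnti x) :
    0 ≤ (expMat lam u).det * (expMat x u).det := by
  by_cases hu : Function.Injective u
  · exact (expMat_mul_pos lam x u hl hx hu).le
  · simp only [Function.Injective, not_forall] at hu
    obtain ⟨i, j, hij, hne⟩ := hu
    rw [Matrix.det_zero_of_column_eq hne (fun k => by simp [expMat, hij]), zero_mul]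

/-- Andréief's identity. -/
lemma andreief {X : Type*} [MeasurableSpace X] (μ : Measure X) [SigmaFinite μ] {r : ℕ}
    (f g : Fin r → X → ℝ) (hint : ∀ i j, Integrable (fun p => f i p * g j p) μ) :
    Integrable (fun u : Fin r → X => (Matrix.of fun i j => f i (u j)).det *
      (Matrix.of fun i j => g i (u j)).det) (Measure.pi fun _ => μ) ∧
    ∫ u : Fin r → X, (Matrix.of fun i j => f i (u j)).det *
      (Matrix.of fun i j => g i (u j)).det ∂(Measure.pi fun _ => μ) =
    (r.factorial : ℝ) * (Matrix.of fun i j => ∫ p, f i p * g j p ∂μ).det := by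
  have e : (fun u : Fin r → X => (Matrix.of fun i j => f i (u j)).det *
      (Matrix.of fun i j => g i (u j)).det) = fun u =>
      ∑ τ : Equiv.Perm (Fin r), ∑ σ : Equiv.Perm (Fin r),
        (((Equiv.Perm.sign τ : ℤ) : ℝ) * ((Equiv.Perm.sign σ : ℤ) : ℝ)) *
          ∏ k, (f (σ k) (u k) * g (τ k) (u k)) := by
    funext u
    rw [Matrix.det_apply', Matrix.det_apply', Finset.sum_mul_sum, Finset.sum_comm]
    refine Finset.sum_congr rfl fun τ _ => Finset.sum_congr rfl fun σ _ => ?_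
    simp only [Matrix.of_apply, Finset.prod_mul_distrib]
    ring
  have hi : ∀ σ τ : Equiv.Perm (Fin r), Integrable (fun u : Fin r → X =>
      (((Equiv.Perm.sign τ : ℤ) : ℝ) * ((Equiv.Perm.sign σ : ℤ) : ℝ)) *
      ∏ k, (f (σ k) (u k) * g (τ k) (u k))) (Measure.pi fun _ => μ) := fun σ τ =>
    Integrable.const_mul (Integrable.fintype_prod (f := fun k p => f (σ k) p * g (τ k) p)
      (fun k => hint _ _)) _
  rw [e]
  refine ⟨integrable_finsetSum _ fun τ _ => integrable_finsetSum _ fun σ _ => hi σ τ, ?_⟩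
  rw [integral_finsetSum _ fun τ _ => integrable_finsetSum _ fun σ _ => hi σ τ]
  have : ∀ τ : Equiv.Perm (Fin r), ∫ u : Fin r → X, ∑ σ : Equiv.Perm (Fin r),
        (((Equiv.Perm.sign τ : ℤ) : ℝ) * ((Equiv.Perm.sign σ : ℤ) : ℝ)) *
          ∏ k, (f (σ k) (u k) * g (τ k) (u k)) ∂(Measure.pi fun _ => μ) =
      (Matrix.of fun i j => ∫ p, f i p * g j p ∂μ).det := by
    intro τ
    rw [integral_finsetSum _ fun σ _ => hi σ τ]
    have h1 := Matrix.det_permute' τ (Matrix.of fun i j => ∫ p, f i p * g j p ∂μ)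
    have h2 : ((Equiv.Perm.sign τ : ℤ) : ℝ) * ((Equiv.Perm.sign τ : ℤ) : ℝ) = 1 := by
      rw [← Int.cast_mul, ← Units.val_mul, Int.units_mul_self]; simp
    rw [Matrix.det_apply'] at h1
    have h3 := congrArg (fun y => ((Equiv.Perm.sign τ : ℤ) : ℝ) * y) h1
    simp only [← mul_assoc, h2, one_mul] at h3
    rw [← h3, Finset.mul_sum]
    refine Finset.sum_congr rfl fun σ _ => ?_
    rw [integral_const_mul,
      integral_fintype_prod_eq_prod (f := fun k p => f (σ k) p * g (τ k) p)]
    simp [mul_assoc]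
  rw [Finset.sum_congr rfl fun τ _ => this τ]
  simp [Fintype.card_perm]

/-- Base measure: Lebesgue measure on `(0,1] × (0,∞)`. -/
noncomputable def bm : Measure (ℝ × ℝ) :=
  (volume.restrict (Ioc (0:ℝ) 1)).prod (volume.restrict (Ioi (0:ℝ)))

instance : SigmaFinite bm := by unfold bm; infer_instance

lemma bm_integrable (z : ℝ) (hz : 0 < z) :
    Integrable (fun p : ℝ × ℝ => Real.exp (-(1 + p.1 * z) * p.2)) bm := by
  have h1 : Integrable (fun p : ℝ × ℝ => (1:ℝ) * Real.exp (-1 * p.2)) bm := by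
    refine Integrable.mul_prod (f := fun _ => (1:ℝ)) (g := fun v => Real.exp (-1 * v)) ?_ ?_
    · exact integrable_const _
    · exact exp_neg_integrableOn_Ioi 0 one_pos
  refine h1.mono (by fun_prop) ?_
  have : ∀ᵐ p ∂bm, p ∈ Ioc (0:ℝ) 1 ×ˢ Ioi (0:ℝ) := by
    unfold bm
    rw [Measure.prod_restrict]
    exact ae_restrict_mem (measurableSet_Ioc.prod measurableSet_Ioi)
  filter_upwards [this] with p hp
  rw [Real.norm_of_nonneg (by positivity), Real.norm_of_nonneg (by positivity), one_mul,
    Real.exp_le_exp]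
  have h2 := hp.1.1
  have h3 : 0 < p.2 := hp.2
  nlinarith [mul_pos (mul_pos h2 hz) h3]

lemma bm_integral (z : ℝ) (hz : 0 < z) :
    ∫ p : ℝ × ℝ, Real.exp (-(1 + p.1 * z) * p.2) ∂bm = Real.log (1 + z) / z := by
  have hi := bm_integrable z hz
  unfold bm at hi ⊢
  rw [integral_prod _ hi]
  have h1 : ∫ t in Ioc (0:ℝ) 1, ∫ v in Ioi (0:ℝ), Real.exp (-(1 + t * z) * v) =
      ∫ t in Ioc (0:ℝ) 1, (1 + t * z)⁻¹ := by
    refine setIntegral_congr_fun measurableSet_Ioc fun t ht => ?_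
    have h0 : 0 < 1 + t * z := by have := mul_pos ht.1 hz; linarith
    rw [integral_exp_mul_Ioi (by linarith)]
    simp only [mul_zero, Real.exp_zero]
    rw [neg_div_neg_eq, one_div]
  rw [h1, ← intervalIntegral.integral_of_le zero_le_one]
  have hpos : ∀ t ∈ uIcc (0:ℝ) 1, 0 < 1 + t * z := by
    intro t ht
    rw [uIcc_of_le zero_le_one] at ht
    have := mul_nonneg ht.1 hz.le; linarith
  rw [intervalIntegral.integral_eq_sub_of_hasDerivAt (f := fun t => Real.log (1 + t * z) / z)]
  · simp
  · intro t ht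
    have := (((hasDerivAt_id t).mul_const z).const_add 1).log (hpos t ht).ne'
    have := this.div_const z
    convert! this using 1
    have := hpos t ht
    simp only [id]
    field_simp
  · refine ContinuousOn.intervalIntegrable ?_
    refine ContinuousOn.inv₀ (by fun_prop) fun t ht => (hpos t ht).ne'

lemma bm_box (a b : ℝ) (ha : 0 < a) (hab : a < b) :
    0 < bm (Ioo (1/2:ℝ) 1 ×ˢ Ioo a b) := by
  unfold bm
  rw [Measure.prod_prod, Measure.restrict_apply measurableSet_Ioo,
    Measure.restrict_apply measurableSet_Ioo]
  rw [inter_eq_left.2, inter_eq_left.2, Real.volume_Ioo, Real.volume_Ioo]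
  · refine ENNReal.mul_pos ?_ ?_
    · simp; norm_num
    · simpa using hab
  · intro v hv; exact ha.trans hv.1
  · intro v hv; exact ⟨by linarith [hv.1], hv.2.le⟩

lemma main_det (r : ℕ) (lam x : Fin r → ℝ) (hl0 : ∀ i, 0 < lam i) (hx0 : ∀ i, 0 < x i)
    (hl : StrictAnti lam) (hx : StrictAnti x) :
    0 < (Matrix.of fun i j : Fin r => Real.log (1 + lam i + x j) / (lam i + x j)).det := by
  let f : Fin r → ℝ × ℝ → ℝ := fun i p => Real.exp (-lam i * (p.1 * p.2))
  let g : Fin r → ℝ × ℝ → ℝ := fun i p => Real.exp (-p.2) * Real.exp (-x i * (p.1 * p.2))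
  have hfg : ∀ i j, (fun p => f i p * g j p) =
      fun p : ℝ × ℝ => Real.exp (-(1 + p.1 * (lam i + x j)) * p.2) := by
    intro i j
    funext p
    simp only [f, g]
    rw [← Real.exp_add, ← Real.exp_add]
    congr 1; ring
  have hpos : ∀ i j, 0 < lam i + x j := fun i j => add_pos (hl0 i) (hx0 j)
  obtain ⟨hI, hE⟩ := andreief bm f g (fun i j => by
    rw [hfg]; exact bm_integrable _ (hpos i j))
  have hM : (Matrix.of fun i j : Fin r => ∫ p, f i p * g j p ∂bm) =
      Matrix.of fun i j : Fin r => Real.log (1 + lam i + x j) / (lam i + x j) := by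
    ext i j
    simp only [Matrix.of_apply]
    rw [hfg, bm_integral _ (hpos i j), add_assoc]
  rw [hM] at hE
  have hG : ∀ u : Fin r → ℝ × ℝ, (Matrix.of fun i j => f i (u j)).det *
      (Matrix.of fun i j => g i (u j)).det = (∏ k, Real.exp (-(u k).2)) *
      ((expMat lam fun k => (u k).1 * (u k).2).det *
        (expMat x fun k => (u k).1 * (u k).2).det) := by
    intro u
    have h1 := Matrix.det_mul_row (fun k => Real.exp (-(u k).2))
      (expMat x fun k => (u k).1 * (u k).2)
    have h2 : (Matrix.of fun i j => g i (u j)).det = _ := h1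
    rw [h2]
    have h3 : (Matrix.of fun i j => f i (u j)) = expMat lam fun k => (u k).1 * (u k).2 := rfl
    rw [h3]; ring
  have hprod : ∀ u : Fin r → ℝ × ℝ, 0 < ∏ k, Real.exp (-(u k).2) :=
    fun u => Finset.prod_pos fun _ _ => Real.exp_pos _
  have hint : 0 < ∫ u : Fin r → ℝ × ℝ, (Matrix.of fun i j => f i (u j)).det *
      (Matrix.of fun i j => g i (u j)).det ∂(Measure.pi fun _ => bm) := by
    rw [integral_pos_iff_support_of_nonneg _ hI]
    · have hbox : 0 < (Measure.pi fun _ : Fin r => bm)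
          (Set.pi univ fun k : Fin r => Ioo (1/2:ℝ) 1 ×ˢ Ioo ((4:ℝ) ^ (k:ℕ)) (2 * 4 ^ (k:ℕ))) := by
        rw [Measure.pi_pi, pos_iff_ne_zero, Finset.prod_ne_zero_iff]
        intro k _
        have h4 : (0:ℝ) < 4 ^ (k:ℕ) := by positivity
        exact (bm_box _ _ h4 (by linarith)).ne'
      refine hbox.trans_le (measure_mono fun u hu => ?_)
      have hu' : StrictMono fun k => (u k).1 * (u k).2 := by
        intro k l hkl
        have hk := hu k (mem_univ _)
        have hl' := hu l (mem_univ _)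
        have p4 : (4:ℝ) * 4 ^ (k:ℕ) ≤ 4 ^ (l:ℕ) := by
          rw [← pow_succ']
          exact pow_le_pow_right₀ (by norm_num) hkl
        have h4 : (0:ℝ) < 4 ^ (k:ℕ) := by positivity
        have a1 := hk.1.2
        have a2 := hk.2.1
        have a3 := hk.2.2
        have b1 := hl'.1.1
        have b2 := hl'.2.1
        simp only at a1 a2 a3 b1 b2 ⊢
        have c1 : (u k).1 * (u k).2 < (u k).2 := by
          nlinarith
        have c2 : (1/2) * (u l).2 < (u l).1 * (u l).2 :=
          mul_lt_mul_of_pos_right b1 (by linarith)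
        linarith
      rw [Function.mem_support, hG]
      exact (mul_pos (hprod u) (expMat_mul_pos _ _ _ hl hx hu'.injective)).ne'
    · intro u
      simp only [Pi.zero_apply]
      rw [hG]
      exact mul_nonneg (hprod u).le (expMat_mul_nonneg _ _ _ hl hx)
  rw [hE] at hint
  exact pos_of_mul_pos_right hint (by positivity)

/-- The weight function
`w₇(λ,x) = [log(1+λ+x)/(λ+x)] · [x/log(1+x)]` is strictly totally positive of order
infinity on `(0,∞)²`. -/
theorem stmt_19 :
    ∀ r : ℕ, 1 ≤ r → ∀ lam x : Fin r → ℝ,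
      (∀ i : Fin r, 0 < lam i) → (∀ j : Fin r, 0 < x j) →
      (∀ i j : Fin r, i < j → lam j < lam i) →
      (∀ i j : Fin r, i < j → x j < x i) →
      0 < Matrix.det (Matrix.of fun i j : Fin r =>
        (Real.log (1 + lam i + x j) / (lam i + x j)) *
          (x j / Real.log (1 + x j))) := by
  intro r _ lam x hl0 hx0 hl hx
  have h1 := main_det r lam x hl0 hx0 (fun i j h => hl i j h) (fun i j h => hx i j h)
  have h2 := Matrix.det_mul_row (fun j => x j / Real.log (1 + x j))
    (Matrix.of fun i j : Fin r => Real.log (1 + lam i + x j) / (lam i + x j))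
  have h3 : (Matrix.of fun i j : Fin r =>
        (Real.log (1 + lam i + x j) / (lam i + x j)) *
          (x j / Real.log (1 + x j))) = Matrix.of fun i j : Fin r =>
      (x j / Real.log (1 + x j)) *
        (Matrix.of fun i j : Fin r => Real.log (1 + lam i + x j) / (lam i + x j)) i j := by
    ext i j
    simp only [Matrix.of_apply]
    ring
  rw [h3, h2]
  refine mul_pos (Finset.prod_pos fun j _ => ?_) h1
  exact div_pos (hx0 j) (Real.log_pos (by linarith [hx0 j]))
end
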